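/- For every Boolean function f : {0,1}^n → {0,1}, the sensitivity satisfies s(f) ≥ √(deg(f)), i.e. s(f)^2 ≥ deg(f). -/

import Mathlib

/-- The real value of a bit: `true ↦ 1`, `false ↦ 0`. -/
def bval (b : Bool) : ℝ := if b then 1 else 0

/-- The sensitivity `s(f)` of a Boolean function `f : {0,1}^n → {0,1}`:
the maximum over inputs `x` of the number of coordinates `i` such that flipping
the `i`-th bit of `x` changes the value of `f`. -/
def sens {n : ℕ} (f : (Fin n → Bool) → Bool) : ℕ :=
  Finset.univ.sup fun x : Fin n → Bool =>
    (Finset.univ.filter fun i : Fin n => f (Function.update x i (!x i)) ≠ f x).card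

/-- The block sensitivity `bs(f)` of a Boolean function `f : {0,1}^n → {0,1}`:
the maximum `t` such that there are an input `x` and `t` pairwise disjoint nonempty
blocks `B₁, …, B_t` of coordinates, flipping any one of which changes the value of `f`. -/
noncomputable def blockSens {n : ℕ} (f : (Fin n → Bool) → Bool) : ℕ :=
  sSup {t : ℕ | ∃ x : Fin n → Bool, ∃ B : Fin t → Finset (Fin n),
    (∀ i, (B i).Nonempty) ∧ (∀ i j, i ≠ j → Disjoint (B i) (B j)) ∧
    (∀ i, f (fun k => if k ∈ B i then !x k else x k) ≠ f x)}

/-- A multivariate polynomial is multilinear if each variable occurs with exponent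
at most 1 in every monomial. -/
def Multilinear {n : ℕ} (p : MvPolynomial (Fin n) ℝ) : Prop :=
  ∀ m ∈ p.support, ∀ i : Fin n, m i ≤ 1

/-- A real polynomial `p` represents the Boolean function `f` if `p(x) = f(x)` for
all `x ∈ {0,1}^n`. -/
def Represents {n : ℕ} (p : MvPolynomial (Fin n) ℝ) (f : (Fin n → Bool) → Bool) : Prop :=
  ∀ x : Fin n → Bool, MvPolynomial.eval (fun i => bval (x i)) p = bval (f x)

/-- A real polynomial `p` approximates the Boolean function `f` if
`|p(x) − f(x)| < 1/3` for all `x ∈ {0,1}^n`. -/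
def Approximates {n : ℕ} (p : MvPolynomial (Fin n) ℝ) (f : (Fin n → Bool) → Bool) : Prop :=
  ∀ x : Fin n → Bool, |MvPolynomial.eval (fun i => bval (x i)) p - bval (f x)| < 1 / 3

namespace HuangAux

open Finset

variable {ι : Type} [Fintype ι] [LinearOrder ι]

/-- flip one bit -/
def fl (i : ι) (x : ι → Bool) : ι → Bool := Function.update x i (!x i)

/-- characters -/
def chi (A : Finset ι) (x : ι → Bool) : ℝ := ∏ k ∈ A, (if x k then -1 else 1)

omit [Fintype ι] in
lemma fl_fl (i : ι) (x : ι → Bool) : fl i (fl i x) = x := by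
  funext k
  by_cases h : k = i
  · subst h; simp [fl]
  · simp [fl, h]

omit [Fintype ι] in
lemma fl_comm (i j : ι) (x : ι → Bool) : fl i (fl j x) = fl j (fl i x) := by
  funext k
  by_cases h : k = i <;> by_cases h' : k = j <;> by_cases h'' : i = j <;>
    simp_all [fl, Function.update_apply]

omit [Fintype ι] in
lemma chi_fl (A : Finset ι) (i : ι) (x : ι → Bool) :
    chi A (fl i x) = if i ∈ A then - chi A x else chi A x := by
  unfold chi
  split_ifs with h
  · rw [← Finset.mul_prod_erase A _ h, ← Finset.mul_prod_erase A (fun k => if x k then (-1:ℝ) else 1) h]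
    have : ∏ k ∈ A.erase i, (if fl i x k then (-1:ℝ) else 1) = ∏ k ∈ A.erase i, (if x k then (-1:ℝ) else 1) := by
      apply Finset.prod_congr rfl
      intro k hk
      simp [fl, (Finset.mem_erase.1 hk).1]
    rw [this]
    cases hx : x i <;> simp [fl, hx]
  · apply Finset.prod_congr rfl
    intro k hk
    have : k ≠ i := by rintro rfl; exact h hk
    simp [fl, this]

omit [Fintype ι] [LinearOrder ι] in
lemma chi_pm (A : Finset ι) (x : ι → Bool) : chi A x = 1 ∨ chi A x = -1 := by
  unfold chi
  apply Finset.prod_induction _ (fun r : ℝ => r = 1 ∨ r = -1)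
  · rintro a b (rfl | rfl) (rfl | rfl) <;> simp
  · simp
  · intro k _
    split_ifs <;> simp

omit [Fintype ι] [LinearOrder ι] in
lemma chi_sq (A : Finset ι) (x : ι → Bool) : chi A x * chi A x = 1 := by
  rcases chi_pm A x with h | h <;> simp [h]

/-- sign -/
def sg (i : ι) (x : ι → Bool) : ℝ := chi (univ.filter (· < i)) x

lemma sg_fl (i j : ι) (x : ι → Bool) : sg j (fl i x) = if i < j then - sg j x else sg j x := by
  simp [sg, chi_fl]

/-- Huang's signed adjacency operator -/
def Aop : ((ι → Bool) → ℝ) →ₗ[ℝ] ((ι → Bool) → ℝ) where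
  toFun v x := ∑ i, sg i x * v (fl i x)
  map_add' u v := by funext x; simp [mul_add, Finset.sum_add_distrib]
  map_smul' c v := by
    funext x
    simp only [Pi.smul_apply, smul_eq_mul, RingHom.id_apply, Finset.mul_sum]
    exact Finset.sum_congr rfl fun i _ => by ring

lemma Aop_apply (v : (ι → Bool) → ℝ) (x) : Aop v x = ∑ i, sg i x * v (fl i x) := rfl

lemma Aop_Aop (v : (ι → Bool) → ℝ) (x) : Aop (Aop v) x = (Fintype.card ι : ℝ) * v x := by
  simp only [Aop_apply, Finset.mul_sum]
  have key : ∀ i j, sg i x * (sg j (fl i x) * v (fl j (fl i x))) =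
      (if i = j then v x else 0) +
      (if i = j then 0 else sg i x * (sg j (fl i x) * v (fl j (fl i x)))) := by
    intro i j
    split_ifs with h
    · subst h
      have := chi_sq (univ.filter (· < i)) x
      rw [sg_fl, fl_fl]
      simp only [lt_irrefl, if_false, add_zero]
      rw [← mul_assoc]
      unfold sg
      rw [this, one_mul]
    · simp
  rw [Finset.sum_congr rfl (fun i _ => Finset.sum_congr rfl (fun j _ => key i j))]
  simp only [Finset.sum_add_distrib]
  set T := ∑ i, ∑ j, (if i = j then 0 else sg i x * (sg j (fl i x) * v (fl j (fl i x)))) with hT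
  have h2 : T = -T := by
    conv_lhs => rw [hT, Finset.sum_comm]
    rw [hT, ← Finset.sum_neg_distrib]
    refine Finset.sum_congr rfl fun i _ => ?_
    rw [← Finset.sum_neg_distrib]
    refine Finset.sum_congr rfl fun j _ => ?_
    rcases lt_trichotomy i j with h | h | h
    · rw [if_neg h.ne', if_neg h.ne, sg_fl, sg_fl, if_pos h, if_neg h.not_gt, fl_comm i j]; ring
    · simp [h]
    · rw [if_neg h.ne, if_neg h.ne', sg_fl, sg_fl, if_pos h, if_neg h.not_gt, fl_comm i j]; ring
  have h3 : T = 0 := by linarith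
  rw [h3]
  simp

lemma sum_fl (i : ι) (g : (ι → Bool) → ℝ) : ∑ x, g (fl i x) = ∑ x, g x :=
  Equiv.sum_comp (Function.Involutive.toPerm (fl i) (fl_fl i)) g

lemma sum_zero_of_anti (i : ι) (g : (ι → Bool) → ℝ) (h : ∀ x, g (fl i x) = - g x) :
    ∑ x, g x = 0 := by
  have := sum_fl i g
  simp_rw [h, Finset.sum_neg_distrib] at this
  linarith

lemma huang [Nonempty ι] (H : Finset (ι → Bool)) (hH : Hᶜ.card < H.card) :
    ∃ x ∈ H, Fintype.card ι ≤ (univ.filter fun i => fl i x ∈ H).card ^ 2 := by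
  obtain ⟨i0⟩ := ‹Nonempty ι›
  set s := Real.sqrt (Fintype.card ι) with hs
  have hss : s * s = Fintype.card ι := Real.mul_self_sqrt (by positivity)
  have hcard : 0 < Fintype.card ι := Fintype.card_pos_iff.2 ⟨i0⟩
  have hspos : 0 < s := Real.sqrt_pos.2 (by exact_mod_cast hcard)
  -- even vertices
  set E : Finset (ι → Bool) := univ.filter (fun x => chi univ x = 1) with hE
  have hEc : E.card = Eᶜ.card := by
    refine Finset.card_bij' (fun x _ => fl i0 x) (fun x _ => fl i0 x) ?_ ?_ ?_ ?_
    · intro x hx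
      simp only [hE, mem_filter, mem_univ, true_and, mem_compl] at *
      rw [chi_fl]; simp [hx]; norm_num
    · intro x hx
      simp only [hE, mem_filter, mem_univ, true_and, mem_compl] at *
      rw [chi_fl]
      rcases chi_pm univ x with h | h
      · exact absurd h hx
      · simp [h]
    · intro x _; exact fl_fl _ _
    · intro x _; exact fl_fl _ _
  have hlt : Hᶜ.card < E.card := by
    have h1 := Finset.card_add_card_compl H
    have h2 := Finset.card_add_card_compl E
    omega
  -- extension by zero
  let ex : (E → ℝ) →ₗ[ℝ] ((ι → Bool) → ℝ) :=
    { toFun := fun u x => if h : x ∈ E then u ⟨x, h⟩ else 0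
      map_add' := by intro u v; funext x; by_cases h : x ∈ E <;> simp [h]
      map_smul' := by intro c v; funext x; by_cases h : x ∈ E <;> simp [h] }
  let T : (E → ℝ) →ₗ[ℝ] ((ι → Bool) → ℝ) := s • ex + Aop ∘ₗ ex
  let R : (E → ℝ) →ₗ[ℝ] ((Hᶜ : Finset (ι → Bool)) → ℝ) :=
    (LinearMap.funLeft ℝ ℝ (fun y : (Hᶜ : Finset (ι → Bool)) => (y : ι → Bool))) ∘ₗ T
  have hker : LinearMap.ker R ≠ ⊥ := by
    apply LinearMap.ker_ne_bot_of_finrank_lt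
    rw [Module.finrank_fintype_fun_eq_card, Module.finrank_fintype_fun_eq_card, Fintype.card_coe, Fintype.card_coe]
    exact hlt
  obtain ⟨u, hu, hu0⟩ := (Submodule.ne_bot_iff _).1 hker
  set v := T u with hv
  have hvH : ∀ x, x ∉ H → v x = 0 := by
    intro x hx
    have := congrFun (LinearMap.mem_ker.1 hu) ⟨x, by simpa using hx⟩
    simpa [R] using this
  have hvA : ∀ x, Aop v x = s * v x := by
    intro x
    have : v = s • ex u + Aop (ex u) := rfl
    rw [this, map_add, map_smul]
    simp only [Pi.add_apply, Pi.smul_apply, smul_eq_mul, Aop_Aop, ← hss]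
    ring
  have hv0 : ∃ x, v x ≠ 0 := by
    by_contra hc
    push Not at hc
    apply hu0
    funext ⟨x, hx⟩
    have h1 := hc x
    have h2 : v x = s * ex u x + Aop (ex u) x := rfl
    have h3 : Aop (ex u) x = 0 := by
      rw [Aop_apply]
      apply Finset.sum_eq_zero
      intro i _
      have : fl i x ∉ E := by
        simp only [hE, mem_filter, mem_univ, true_and] at hx ⊢
        rw [chi_fl]; simp [hx]; norm_num
      have : ex u (fl i x) = 0 := by simp only [ex]; exact dif_neg this
      rw [this, mul_zero]
    have h4 : ex u x = u ⟨x, hx⟩ := by simp only [ex]; exact dif_pos hx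
    rw [h2, h3, h4, add_zero] at h1
    simpa [hspos.ne'] using h1
  obtain ⟨x, -, hx⟩ := Finset.exists_max_image univ (fun x => |v x|) ⟨fun _ => true, mem_univ _⟩
  have hxpos : 0 < |v x| := by
    obtain ⟨y, hy⟩ := hv0
    exact lt_of_lt_of_le (abs_pos.2 hy) (hx y (mem_univ _))
  have hxH : x ∈ H := by
    by_contra h
    simp [hvH x h] at hxpos
  refine ⟨x, hxH, ?_⟩
  have hmain : s * |v x| ≤ ((univ.filter fun i => fl i x ∈ H).card : ℝ) * |v x| := by
    calc s * |v x| = |Aop v x| := by rw [hvA, abs_mul, abs_of_pos hspos]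
      _ ≤ ∑ i, |sg i x * v (fl i x)| := by rw [Aop_apply]; exact Finset.abs_sum_le_sum_abs _ _
      _ ≤ ∑ i, (if fl i x ∈ H then |v x| else 0) := by
        apply Finset.sum_le_sum
        intro i _
        split_ifs with h
        · have : |sg i x| = 1 := by
            unfold sg
            rcases chi_pm (univ.filter (· < i)) x with h | h <;> simp [h]
          rw [abs_mul, this, one_mul]
          exact hx _ (mem_univ _)
        · simp [hvH _ h]
      _ = _ := by rw [← Finset.sum_filter, Finset.sum_const, nsmul_eq_mul]
  have h5 := le_of_mul_le_mul_right hmain hxpos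
  have : (Fintype.card ι : ℝ) ≤ ((univ.filter fun i => fl i x ∈ H).card : ℝ) ^ 2 := by
    rw [← hss, sq]
    exact mul_self_le_mul_self hspos.le h5
  exact_mod_cast this

end HuangAux

open HuangAux Finset in
lemma sens_of_sum_ne {n : ℕ} (f : (Fin n → Bool) → Bool) (S : Finset (Fin n)) (hS : S.Nonempty)
    (h : ∑ x : S → Bool, chi univ x *
      bval (f (fun i => if h : i ∈ S then x ⟨i, h⟩ else false)) ≠ 0) :
    S.card ≤ sens f ^ 2 := by
  obtain ⟨i0, hi0⟩ := hS
  have : Nonempty S := ⟨⟨i0, hi0⟩⟩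
  let ext : (S → Bool) → Fin n → Bool := fun x i => if h : i ∈ S then x ⟨i, h⟩ else false
  change ∑ x : S → Bool, chi univ x * bval (f (ext x)) ≠ 0 at h
  let G : (S → Bool) → ℝ := fun x => chi univ x * (1 - 2 * bval (f (ext x)))
  have hG : ∑ x, G x ≠ 0 := by
    have h1 : ∑ x : S → Bool, chi univ x = 0 :=
      sum_zero_of_anti (⟨i0, hi0⟩ : S) _ (fun x => by rw [chi_fl]; simp)
    have : ∑ x, G x = ∑ x : S → Bool, chi univ x - 2 * ∑ x : S → Bool, chi univ x * bval (f (ext x)) := by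
      rw [Finset.mul_sum, ← Finset.sum_sub_distrib]
      exact Finset.sum_congr rfl fun x _ => by simp only [G]; ring
    rw [this, h1]
    intro h2
    apply h
    linarith
  have hGpm : ∀ x, G x = 1 ∨ G x = -1 := by
    intro x
    rcases chi_pm univ x with h | h <;> cases hf : f (ext x) <;> simp only [G, h, hf, bval] <;> norm_num
  obtain ⟨c, hc, hcs⟩ : ∃ c : ℝ, (c = 1 ∨ c = -1) ∧ 0 < ∑ x, c * G x := by
    rcases lt_or_gt_of_ne hG with h | h
    · exact ⟨-1, by simp, by rw [← Finset.mul_sum]; linarith⟩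
    · exact ⟨1, by simp, by rw [← Finset.mul_sum]; linarith⟩
  classical
  let H : Finset (S → Bool) := univ.filter (fun x => G x = c)
  have hH : Hᶜ.card < H.card := by
    have h1 : ∑ x, c * G x = (H.card : ℝ) - Hᶜ.card := by
      rw [← Finset.sum_add_sum_compl H]
      have a1 : ∑ x ∈ H, c * G x = ∑ x ∈ H, 1 := by
        apply Finset.sum_congr rfl
        intro x hx
        have : G x = c := by simpa [H] using hx
        rw [this]
        rcases hc with h | h <;> simp [h]
      have a2 : ∑ x ∈ Hᶜ, c * G x = ∑ x ∈ Hᶜ, (-1) := by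
        apply Finset.sum_congr rfl
        intro x hx
        have : G x ≠ c := by simpa [H] using hx
        rcases hc with h | h <;> rcases hGpm x with h' | h' <;> simp_all
      rw [a1, a2]
      simp [sub_eq_add_neg]
    rw [h1] at hcs
    exact_mod_cast sub_pos.1 hcs
  obtain ⟨x, hxH, hx⟩ := huang H hH
  rw [Fintype.card_coe] at hx
  refine hx.trans (Nat.pow_le_pow_left ?_ 2)
  refine le_trans ?_ (Finset.le_sup (f := fun x : Fin n → Bool =>
    (Finset.univ.filter fun i : Fin n => f (Function.update x i (!x i)) ≠ f x).card) (mem_univ (ext x)))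
  apply Finset.card_le_card_of_injOn (fun i : S => (i : Fin n))
  · intro i hi
    simp only [coe_filter, mem_univ, true_and, Set.mem_ofPred_eq] at hi ⊢
    have he : Function.update (ext x) i (!ext x i) = ext (fl i x) := by
      funext k
      by_cases hk : k = i
      · subst hk; simp [ext, fl]
      · by_cases hkS : k ∈ S
        · have : (⟨k, hkS⟩ : S) ≠ i := fun h => hk (by rw [← h])
          simp [ext, fl, hk, hkS, this]
        · simp [ext, hk, hkS]
    rw [he]
    intro heq
    have g1 : G x = c := by simpa [H] using hxH
    have g2 : G (fl i x) = c := by simpa [H] using hi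
    have g3 : G (fl i x) = - G x := by
      simp only [G, heq]; rw [chi_fl]; simp
    rcases hc with h | h <;> linarith
  · exact fun a _ b _ h => Subtype.ext h

open HuangAux Finset in
theorem sens_sq_ge_degree (n : ℕ) (f : (Fin n → Bool) → Bool)
    (p : MvPolynomial (Fin n) ℝ) (hml : Multilinear p) (hrep : Represents p f) :
    p.totalDegree ≤ sens f ^ 2 := by
  by_cases hd : p.totalDegree = 0
  · rw [hd]; exact Nat.zero_le _
  have hp : p ≠ 0 := by rintro rfl; simp at hd
  obtain ⟨m0, hm0, hdeg⟩ := Finset.exists_mem_eq_sup p.support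
    (MvPolynomial.support_nonempty.2 hp) (fun m => m.sum fun _ e => e)
  change p.totalDegree = _ at hdeg
  have hsum : ∀ m : Fin n →₀ ℕ, (m.sum fun _ e => e) = ∑ i, m i := fun m =>
    Finsupp.sum_fintype _ _ (by simp)
  have hval : ∀ i, m0 i = if i ∈ m0.support then 1 else 0 := by
    intro i
    have := hml m0 hm0 i
    split_ifs with h
    · have := Finsupp.mem_support_iff.1 h; omega
    · simpa using h
  have hcard : p.totalDegree = m0.support.card := by
    rw [hdeg, hsum, Finset.sum_congr rfl (fun i _ => hval i), Finset.sum_ite_mem]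
    simp
  set S := m0.support with hSdef
  rw [hcard]
  apply sens_of_sum_ne f S
  · rw [← Finset.card_pos]; omega
  have hone : ∀ m ∈ p.support, (∀ i ∈ S, m i ≠ 0) → m = m0 := by
    intro m hm h
    have hle : ∀ i, m0 i ≤ m i := by
      intro i
      rw [hval i]
      split_ifs with hi
      · exact Nat.one_le_iff_ne_zero.2 (h i hi)
      · exact Nat.zero_le _
    have h1 : ∑ i, m i ≤ ∑ i, m0 i := by
      rw [← hsum, ← hsum, ← hdeg]
      exact MvPolynomial.le_totalDegree hm
    have h2 := (Finset.sum_eq_sum_iff_of_le (fun i (_ : i ∈ univ) => hle i)).1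
      (le_antisymm (Finset.sum_le_sum fun i _ => hle i) h1)
    ext i
    exact (h2 i (mem_univ i)).symm
  let ext : (S → Bool) → Fin n → Bool := fun x i => if h : i ∈ S then x ⟨i, h⟩ else false
  change ∑ x : S → Bool, chi univ x * bval (f (ext x)) ≠ 0
  have e1 : ∑ x : S → Bool, chi univ x * bval (f (ext x)) =
      ∑ m ∈ p.support, p.coeff m * ∑ x : S → Bool, chi univ x * ∏ i, bval (ext x i) ^ m i := by
    simp_rw [Finset.mul_sum]
    rw [Finset.sum_comm]
    refine Finset.sum_congr rfl fun x _ => ?_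
    rw [← hrep (ext x), MvPolynomial.eval_eq', Finset.mul_sum]
    exact Finset.sum_congr rfl fun m _ => by ring
  rw [e1, Finset.sum_eq_single m0]
  · apply mul_ne_zero (MvPolynomial.mem_support_iff.1 hm0)
    rw [Finset.sum_eq_single (fun _ => true)]
    · apply mul_ne_zero
      · rcases chi_pm univ (fun _ : S => true) with h | h <;> rw [h] <;> norm_num
      · rw [Finset.prod_ne_zero_iff]
        intro i _
        by_cases hi : i ∈ S
        · simp [ext, hi, bval]
        · have : m0 i = 0 := by rw [hval i, if_neg hi]
          simp [this]
    · intro x _ hx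
      obtain ⟨i, hi⟩ := Function.ne_iff.1 hx
      have hi' : x i = false := by simpa using hi
      rw [Finset.prod_eq_zero (mem_univ (i : Fin n)), mul_zero]
      have : m0 i ≠ 0 := Finsupp.mem_support_iff.1 i.2
      simp [ext, hi', bval, this]
    · simp
  · intro m hm hne
    have : ∃ i ∈ S, m i = 0 := by
      by_contra hc
      push Not at hc
      exact hne (hone m hm hc)
    obtain ⟨i, hi, hmi⟩ := this
    refine mul_eq_zero_of_right _ (sum_zero_of_anti (⟨i, hi⟩ : S) _ ?_)
    intro x
    rw [chi_fl]
    simp only [mem_univ, if_true, neg_mul, neg_inj]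
    congr 1
    apply Finset.prod_congr rfl
    intro k _
    by_cases hk : k = i
    · subst hk; simp [hmi]
    · simp [ext, fl, Function.update_apply, hk]
  · intro h; exact absurd hm0 h
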